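/- Fix a group s ∈ 𝒮 and use the Gaussian kernel K(z) = (2π)^{−1/2} exp(−‖z‖²). Let ν_{f̄(D_s)} denote the law of f̄ evaluated at a training point of group s drawn uniformly from D_s (over both the uniform draw and the randomness of T_s). Let Δ_min := min_{i≠j} ‖u_i^s − u_j^s‖₂ > 0 and let Δ_max := max over pairs of support points ξ, ξ' of ν̃₀ of ‖ξ − ξ'‖₂. Then W₂²(ν_{f̄(D_s)}, ν̃₀) ≤ n_s² · exp(−Δ_min²/h²) · Δ_max². -/

import Mathlib

open MeasureTheory ProbabilityTheory ENNReal

noncomputable section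

abbrev Euc (k : ℕ) : Type := EuclideanSpace ℝ (Fin k)

/-- Squared Wasserstein-2 distance between measures on `ℝ^k`,
as the infimum over couplings of the expected squared Euclidean distance. -/
def W2sq {k : ℕ} (μ ν : Measure (Euc k)) : ℝ≥0∞ :=
  ⨅ γ ∈ {γ : Measure (Euc k × Euc k) |
      γ.map Prod.fst = μ ∧ γ.map Prod.snd = ν},
    ∫⁻ p, (‖p.1 - p.2‖₊ : ℝ≥0∞) ^ 2 ∂γ

/-- The law of `f (X, S)` conditional on `S = s`. -/
def condLaw {Ω : Type*} [MeasurableSpace Ω] {d k m : ℕ} (P : Measure Ω)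
    (X : Ω → Euc d) (S : Ω → Fin m) (f : Euc d → Fin m → Euc k) (s : Fin m) :
    Measure (Euc k) :=
  (ProbabilityTheory.cond P {ω | S ω = s}).map fun ω => f (X ω) (S ω)

/-- Finite second moment functional. -/
def secondMoment {k : ℕ} (μ : Measure (Euc k)) : ℝ≥0∞ :=
  ∫⁻ y, (‖y‖₊ : ℝ≥0∞) ^ 2 ∂μ

/-- The Gaussian kernel `K(z) = (2π)^{-1/2} exp(-‖z‖²)`. -/
def gaussK {k : ℕ} (z : Euc k) : ℝ :=
  (Real.sqrt (2 * Real.pi))⁻¹ * Real.exp (-(‖z‖ ^ 2))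

/-- Single-group Nadaraya–Watson extrapolation of the random transport map `T`:
`a ↦ Σ_i K((a - u_i)/h) T(u_i) / Σ_j K((a - u_j)/h)`, with randomness `θ`. -/
def nwMap {k : ℕ} {Θ : Type*} {n : ℕ} (u : Fin n → Euc k) (T : Fin n → Θ → Euc k)
    (h : ℝ) (θ : Θ) (a : Euc k) : Euc k :=
  (∑ j : Fin n, gaussK (h⁻¹ • (a - u j)))⁻¹ •
    ∑ i : Fin n, gaussK (h⁻¹ • (a - u i)) • T i θ

/-- The uniform probability measure on `Fin n`. -/
def unifFin (n : ℕ) : Measure (Fin n) :=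
  (n : ℝ≥0∞)⁻¹ • ∑ i : Fin n, Measure.dirac i

/-!
Couple the two laws through the same draw: the Nadaraya–Watson output at `u i` with `T i θ` itself,
whose law is the barycenter `∑ j, w j δ_{ξ j}`. At `u i` the output is an average of the values
`T j θ` in which every `j ≠ i` weighs at most `exp (-Δmin² / h²)` times as much as `i`, so it lies
within `(n - 1) exp (-Δmin² / h²) Δmax` of `T i θ`.
-/

lemma norm_centerMass_sub_le {ι E : Type*} [SeminormedAddCommGroup E] [NormedSpace ℝ E]
    {s : Finset ι} {p : ι → ℝ} {z : ι → E} {i : ι} {ε D : ℝ} (hi : i ∈ s) (hpi : 0 < p i)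
    (hp : ∀ j ∈ s, 0 ≤ p j) (hpε : ∀ j ∈ s, j ≠ i → p j ≤ ε * p i)
    (hD : ∀ j ∈ s, ‖z j - z i‖ ≤ D) :
    ‖s.centerMass p z - z i‖ ≤ (s.card - 1) * ε * D := by
  classical
  set P := ∑ j ∈ s, p j with hP
  have hpiP : p i ≤ P := Finset.single_le_sum hp hi
  have hP0 : 0 < P := hpi.trans_le hpiP
  have hsub : s.centerMass p z - z i = P⁻¹ • ∑ j ∈ s.erase i, p j • (z j - z i) := by
    rw [Finset.sum_erase s (by rw [sub_self, smul_zero])]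
    simp only [smul_sub, Finset.sum_sub_distrib, ← Finset.sum_smul]
    rw [← hP, inv_smul_smul₀ hP0.ne', Finset.centerMass]
  have hsum : ‖∑ j ∈ s.erase i, p j • (z j - z i)‖ ≤ p i * ((s.card - 1) * ε * D) :=
    calc ‖∑ j ∈ s.erase i, p j • (z j - z i)‖
        ≤ ∑ _j ∈ s.erase i, ε * p i * D := by
          refine norm_sum_le_of_le _ fun j hj ↦ ?_
          obtain ⟨hji, hjs⟩ := Finset.mem_erase.mp hj
          rw [norm_smul, Real.norm_of_nonneg (hp j hjs)]
          exact mul_le_mul (hpε j hjs hji) (hD j hjs) (norm_nonneg _)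
            ((hp j hjs).trans (hpε j hjs hji))
      _ = p i * ((s.card - 1) * ε * D) := by
          rw [Finset.sum_const, nsmul_eq_mul, Finset.cast_card_erase_of_mem hi]
          ring
  have hbound : 0 ≤ (s.card - 1) * ε * D :=
    nonneg_of_mul_nonneg_right ((norm_nonneg _).trans hsum) hpi
  rw [hsub, norm_smul, norm_inv, Real.norm_of_nonneg hP0.le, inv_mul_le_iff₀ hP0]
  exact hsum.trans (mul_le_mul_of_nonneg_right hpiP hbound)

section GaussianKernel

variable {k : ℕ}

lemma gaussK_pos (z : Euc k) : 0 < gaussK z := by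
  unfold gaussK
  positivity

lemma gaussK_le_exp_mul_gaussK_zero {z : Euc k} {r : ℝ} (hr : 0 ≤ r) (hz : r ≤ ‖z‖) :
    gaussK z ≤ Real.exp (-r ^ 2) * gaussK (0 : Euc k) := by
  have hexp : Real.exp (-‖z‖ ^ 2) ≤ Real.exp (-r ^ 2) := by gcongr
  calc gaussK z ≤ (√(2 * Real.pi))⁻¹ * Real.exp (-r ^ 2) :=
        mul_le_mul_of_nonneg_left hexp (by positivity)
    _ = Real.exp (-r ^ 2) * gaussK (0 : Euc k) := by simp [gaussK, mul_comm]

end GaussianKernel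

section NadarayaWatson

variable {k n : ℕ} {Θ : Type*} {u : Fin n → Euc k} {T : Fin n → Θ → Euc k} {h : ℝ}

lemma nwMap_eq_centerMass (u : Fin n → Euc k) (T : Fin n → Θ → Euc k) (h : ℝ) (θ : Θ)
    (a : Euc k) :
    nwMap u T h θ a = Finset.univ.centerMass (fun j ↦ gaussK (h⁻¹ • (a - u j))) (T · θ) :=
  rfl

lemma norm_nwMap_sub_le {δ D : ℝ} {θ : Θ} {i : Fin n} (hh : 0 < h) (hδ : 0 ≤ δ)
    (hu : ∀ j, j ≠ i → δ ≤ ‖u i - u j‖) (hT : ∀ j, ‖T j θ - T i θ‖ ≤ D) :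
    ‖nwMap u T h θ (u i) - T i θ‖ ≤ (n - 1) * Real.exp (-(δ ^ 2 / h ^ 2)) * D := by
  have hweight : ∀ j, j ≠ i → gaussK (h⁻¹ • (u i - u j)) ≤
      Real.exp (-(δ ^ 2 / h ^ 2)) * gaussK (h⁻¹ • (u i - u i)) := fun j hji ↦ by
    have hdist : δ / h ≤ ‖h⁻¹ • (u i - u j)‖ := by
      rw [norm_smul_of_nonneg (inv_nonneg.mpr hh.le), div_eq_inv_mul]
      exact mul_le_mul_of_nonneg_left (hu j hji) (inv_nonneg.mpr hh.le)
    rw [sub_self, smul_zero, ← div_pow]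
    exact gaussK_le_exp_mul_gaussK_zero (div_nonneg hδ hh.le) hdist
  simpa only [nwMap_eq_centerMass, Finset.card_univ, Fintype.card_fin] using
    norm_centerMass_sub_le (z := (T · θ)) (Finset.mem_univ i) (gaussK_pos _)
      (fun j _ ↦ (gaussK_pos _).le) (fun j _ ↦ hweight j) (fun j _ ↦ hT j)

lemma measurable_nwMap_apply [MeasurableSpace Θ] (hT : ∀ i, Measurable (T i)) (a : Euc k) :
    Measurable fun θ ↦ nwMap u T h θ a := by
  unfold nwMap
  fun_prop

end NadarayaWatson

section Wasserstein

variable {k : ℕ} {Ω : Type*} [MeasurableSpace Ω] {μ : Measure Ω} {F G : Ω → Euc k}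

lemma W2sq_map_map_le_lintegral (hF : AEMeasurable F μ) (hG : AEMeasurable G μ) :
    W2sq (μ.map F) (μ.map G) ≤ ∫⁻ ω, ‖F ω - G ω‖ₑ ^ 2 ∂μ :=
  calc W2sq (μ.map F) (μ.map G)
      ≤ ∫⁻ p, ‖p.1 - p.2‖ₑ ^ 2 ∂μ.map fun ω ↦ (F ω, G ω) :=
        iInf₂_le _ ⟨Measure.fst_map_prodMk₀ hG, Measure.snd_map_prodMk₀ hF⟩
    _ = ∫⁻ ω, ‖F ω - G ω‖ₑ ^ 2 ∂μ := lintegral_map' (by fun_prop) (hF.prodMk hG)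

lemma W2sq_map_map_le_of_ae_norm_sub_le [IsProbabilityMeasure μ] (hF : AEMeasurable F μ)
    (hG : AEMeasurable G μ) {R : ℝ} (hR : ∀ᵐ ω ∂μ, ‖F ω - G ω‖ ≤ R) :
    W2sq (μ.map F) (μ.map G) ≤ ENNReal.ofReal (R ^ 2) := by
  refine (W2sq_map_map_le_lintegral hF hG).trans (lintegral_le_const ?_)
  filter_upwards [hR] with ω hω
  rw [← ofReal_norm, ← ENNReal.ofReal_pow (norm_nonneg _)]
  exact ENNReal.ofReal_le_ofReal (pow_le_pow_left₀ (norm_nonneg _) hω 2)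

end Wasserstein

section DiscreteLaw

variable {α ι : Type*} [MeasurableSpace α] [MeasurableSingletonClass α] {x : ι → α}

lemma ae_mem_range_of_sum_eq_one {Ω : Type*} [MeasurableSpace Ω] [Fintype ι] {μ : Measure Ω}
    [IsProbabilityMeasure μ] {f : Ω → α} (hf : Measurable f) (hx : Function.Injective x)
    (hsum : ∑ j, μ {ω | f ω = x j} = 1) : ∀ᵐ ω ∂μ, f ω ∈ Set.range x := by
  have hmeas : ∀ j, MeasurableSet {ω | f ω = x j} := fun j ↦ hf (measurableSet_singleton (x j))
  have hdisj : Pairwise (Function.onFun Disjoint fun j ↦ {ω | f ω = x j}) := fun i j hij ↦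
    Set.disjoint_left.mpr fun ω hi hj ↦ hij (hx (hi.symm.trans hj))
  have hunion : μ (⋃ j, {ω | f ω = x j}) = 1 := by
    rw [measure_iUnion hdisj hmeas, tsum_fintype, hsum]
  filter_upwards [(mem_ae_iff_prob_eq_one (MeasurableSet.iUnion hmeas)).mpr hunion] with ω hω
  obtain ⟨j, hj⟩ := Set.mem_iUnion.mp hω
  exact ⟨j, hj.symm⟩

lemma sum_measure_singleton_smul_dirac [Fintype ι] {μ : Measure α} (hx : Function.Injective x)
    (hμ : ∀ᵐ y ∂μ, y ∈ Set.range x) : ∑ j, μ {x j} • Measure.dirac (x j) = μ := by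
  have hdisj : Pairwise (Function.onFun Disjoint fun j ↦ ({x j} : Set α)) := fun i j hij ↦
    Set.disjoint_singleton.mpr (hx.ne hij)
  calc ∑ j, μ {x j} • Measure.dirac (x j) = μ.restrict (⋃ j, {x j}) := by
        rw [Measure.restrict_iUnion hdisj fun j ↦ measurableSet_singleton _, Measure.sum_fintype]
        simp only [Measure.restrict_singleton]
    _ = μ := by
        rw [Set.iUnion_singleton_eq_range, Measure.restrict_eq_self_of_ae_mem hμ]

end DiscreteLaw

section UniformDraw

variable {n : ℕ} {Θ E : Type*} [MeasurableSpace Θ] [MeasurableSpace E] {Q : Measure Θ}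
  {T : Fin n → Θ → E}

instance isProbabilityMeasure_unifFin [NeZero n] : IsProbabilityMeasure (unifFin n) where
  measure_univ := by
    simp [unifFin, ENNReal.inv_mul_cancel (NeZero.ne (n : ℝ≥0∞)) (ENNReal.natCast_ne_top n)]

lemma map_unifFin_prod [SFinite Q] (hT : ∀ i, Measurable (T i)) :
    ((unifFin n).prod Q).map (fun q ↦ T q.1 q.2) = (n : ℝ≥0∞)⁻¹ • ∑ i, Q.map (T i) := by
  have hT' : Measurable fun q : Fin n × Θ ↦ T q.1 q.2 := measurable_from_prod_countable_right hT
  rw [unifFin, Measure.prod_smul_left, Measure.map_smul, ← Measure.sum_fintype,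
    Measure.prod_sum_left, Measure.map_sum hT'.aemeasurable, Measure.sum_fintype]
  simp only [Measure.dirac_prod, Measure.map_map hT' measurable_prodMk_left, Function.comp_def]

lemma ae_forall_mem_range_of_coupling [IsProbabilityMeasure Q] [NeZero n]
    [MeasurableSingletonClass E] {ι : Type*} [Fintype ι] {ξ : ι → E} {γ : Fin n → ι → ℝ≥0∞}
    (hT : ∀ i, Measurable (T i)) (hξ : Function.Injective ξ)
    (hTγ : ∀ i j, Q {θ | T i θ = ξ j} = γ i j * n) (hγ : ∀ i, ∑ j, γ i j = (n : ℝ≥0∞)⁻¹) :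
    ∀ᵐ θ ∂Q, ∀ i, T i θ ∈ Set.range ξ := by
  refine ae_all_iff.mpr fun i ↦ ae_mem_range_of_sum_eq_one (hT i) hξ ?_
  simp only [hTγ]
  rw [← Finset.sum_mul, hγ, ENNReal.inv_mul_cancel (NeZero.ne _) (ENNReal.natCast_ne_top n)]

lemma map_unifFin_prod_eq_sum_smul_dirac [SFinite Q] [NeZero n] [MeasurableSingletonClass E]
    {ι : Type*} [Fintype ι] {ξ : ι → E} {w : ι → ℝ≥0∞} {γ : Fin n → ι → ℝ≥0∞}
    (hT : ∀ i, Measurable (T i)) (hξ : Function.Injective ξ)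
    (hTξ : ∀ᵐ θ ∂Q, ∀ i, T i θ ∈ Set.range ξ)
    (hTγ : ∀ i j, Q {θ | T i θ = ξ j} = γ i j * n) (hγ : ∀ j, ∑ i, γ i j = w j) :
    ((unifFin n).prod Q).map (fun q ↦ T q.1 q.2) = ∑ j, w j • Measure.dirac (ξ j) := by
  have hlaw : ∀ i, Q.map (T i) = ∑ j, (γ i j * n) • Measure.dirac (ξ j) := fun i ↦ by
    have hrange : ∀ᵐ y ∂Q.map (T i), y ∈ Set.range ξ :=
      (ae_map_iff (hT i).aemeasurable (Set.finite_range ξ).measurableSet).mpr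
        (hTξ.mono fun θ hθ ↦ hθ i)
    rw [← sum_measure_singleton_smul_dirac hξ hrange]
    refine Finset.sum_congr rfl fun j _ ↦ ?_
    rw [Measure.map_apply (hT i) (measurableSet_singleton _), ← hTγ]
    rfl
  have hmass : ∀ j, (n : ℝ≥0∞)⁻¹ * ∑ i, γ i j * n = w j := fun j ↦ by
    rw [← Finset.sum_mul, hγ, mul_comm,
      ENNReal.mul_inv_cancel_right (NeZero.ne _) (ENNReal.natCast_ne_top n)]
  rw [map_unifFin_prod hT]
  simp only [hlaw]
  rw [Finset.sum_comm, Finset.smul_sum]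
  simp only [← Finset.sum_smul, smul_smul, hmass]

end UniformDraw

lemma W2sq_map_nwMap_map_le {k n : ℕ} [NeZero n] {Θ : Type*} [MeasurableSpace Θ]
    {Q : Measure Θ} [IsProbabilityMeasure Q] {u : Fin n → Euc k} {T : Fin n → Θ → Euc k}
    {h δ D : ℝ} (hT : ∀ i, Measurable (T i)) (hh : 0 < h) (hδ : 0 ≤ δ)
    (hu : ∀ i j, i ≠ j → δ ≤ ‖u i - u j‖) (hD : ∀ᵐ θ ∂Q, ∀ i j, ‖T i θ - T j θ‖ ≤ D) :
    W2sq (((unifFin n).prod Q).map fun q ↦ nwMap u T h q.2 (u q.1))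
        (((unifFin n).prod Q).map fun q ↦ T q.1 q.2)
      ≤ ENNReal.ofReal (((n - 1) * Real.exp (-(δ ^ 2 / h ^ 2)) * D) ^ 2) := by
  have hnw : Measurable fun q : Fin n × Θ ↦ nwMap u T h q.2 (u q.1) :=
    measurable_from_prod_countable_right fun i ↦ measurable_nwMap_apply hT (u i)
  have hT' : Measurable fun q : Fin n × Θ ↦ T q.1 q.2 := measurable_from_prod_countable_right hT
  refine W2sq_map_map_le_of_ae_norm_sub_le hnw.aemeasurable hT'.aemeasurable ?_
  filter_upwards [Measure.quasiMeasurePreserving_snd.ae hD] with q hq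
  exact norm_nwMap_sub_le hh hδ (fun j hj ↦ hu q.1 j hj.symm) fun j ↦ hq j q.1

lemma ofReal_sq_sub_one_mul_exp_neg_mul_le {n : ℕ} (hn : 0 < n) {t : ℝ} (ht : 0 ≤ t) (D : ℝ) :
    ENNReal.ofReal (((n - 1) * Real.exp (-t) * D) ^ 2)
      ≤ (n : ℝ≥0∞) ^ 2 * ENNReal.ofReal (Real.exp (-t)) * ENNReal.ofReal (D ^ 2) := by
  have hn1 : (0 : ℝ) ≤ n - 1 := sub_nonneg.mpr (Nat.one_le_cast.mpr hn)
  have hexp : Real.exp (-t) ^ 2 ≤ Real.exp (-t) :=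
    pow_le_of_le_one (Real.exp_nonneg _) (Real.exp_le_one_iff.mpr (neg_nonpos.mpr ht)) two_ne_zero
  have hreal : (((n : ℝ) - 1) * Real.exp (-t) * D) ^ 2 ≤ (n : ℝ) ^ 2 * Real.exp (-t) * D ^ 2 := by
    rw [mul_pow, mul_pow]
    gcongr
    exact sub_le_self _ zero_le_one
  refine (ENNReal.ofReal_le_ofReal hreal).trans_eq ?_
  rw [ENNReal.ofReal_mul (by positivity), ENNReal.ofReal_mul (by positivity),
    ENNReal.ofReal_pow (Nat.cast_nonneg _), ENNReal.ofReal_natCast]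

theorem W2sq_nw_training_to_barycenter_general {k n : ℕ} {Θ ι : Type*} [MeasurableSpace Θ]
    [Fintype ι] {Q : Measure Θ} [IsProbabilityMeasure Q] (hn : 0 < n) {u : Fin n → Euc k}
    {ξ : ι → Euc k} (hξ : Function.Injective ξ) {w : ι → ℝ≥0∞}
    {γ : Fin n → ι → ℝ≥0∞} (hγrow : ∀ i, ∑ j, γ i j = (n : ℝ≥0∞)⁻¹)
    (hγcol : ∀ j, ∑ i, γ i j = w j) {T : Fin n → Θ → Euc k} (hT : ∀ i, Measurable (T i))
    (hTdist : ∀ i j, Q {θ | T i θ = ξ j} = γ i j * n) {h : ℝ} (hh : 0 < h) {Δmin Δmax : ℝ}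
    (hΔmin0 : 0 ≤ Δmin) (hΔmin : ∀ i j, i ≠ j → Δmin ≤ ‖u i - u j‖)
    (hΔmax : ∀ j j', ‖ξ j - ξ j'‖ ≤ Δmax) :
    W2sq (((unifFin n).prod Q).map fun q ↦ nwMap u T h q.2 (u q.1))
        (∑ j, w j • Measure.dirac (ξ j))
      ≤ ENNReal.ofReal (((n - 1) * Real.exp (-(Δmin ^ 2 / h ^ 2)) * Δmax) ^ 2) := by
  have : NeZero n := ⟨hn.ne'⟩
  have hTξ : ∀ᵐ θ ∂Q, ∀ i, T i θ ∈ Set.range ξ :=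
    ae_forall_mem_range_of_coupling hT hξ hTdist hγrow
  have hTdiam : ∀ᵐ θ ∂Q, ∀ i j, ‖T i θ - T j θ‖ ≤ Δmax := by
    filter_upwards [hTξ] with θ hθ i i'
    obtain ⟨j, hj⟩ := hθ i
    obtain ⟨j', hj'⟩ := hθ i'
    exact hj ▸ hj' ▸ hΔmax j j'
  rw [← map_unifFin_prod_eq_sum_smul_dirac hT hξ hTξ hTdist hγcol]
  exact W2sq_map_nwMap_map_le hT hh hΔmin0 hΔmin hTdiam

/-- for a fixed group, with `ν_{f̄(D_s)}` the law of the Nadaraya–Watson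
post-processed output at a uniformly drawn training point (over both the uniform draw and
the randomness of the transport map `T`), and `ν̃₀ = Σ_j w_j δ_{ξ_j}` the approximate
barycenter, one has `W₂²(ν_{f̄(D_s)}, ν̃₀) ≤ n² exp(-Δ_min²/h²) Δ_max²`. -/
theorem W2sq_nw_training_to_barycenter {k : ℕ} {Θ : Type*} [MeasurableSpace Θ]
    (Q : Measure Θ) [IsProbabilityMeasure Q]
    (n : ℕ) (hn : 0 < n) (u : Fin n → Euc k) (hu : Function.Injective u)
    (n0 : ℕ) (ξ : Fin n0 → Euc k) (hξ : Function.Injective ξ)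
    (w : Fin n0 → ℝ≥0∞) (hw : ∑ j : Fin n0, w j = 1)
    (γ : Fin n → Fin n0 → ℝ≥0∞)
    (hγrow : ∀ i, ∑ j : Fin n0, γ i j = ((n : ℝ≥0∞))⁻¹)
    (hγcol : ∀ j, ∑ i : Fin n, γ i j = w j)
    (hγopt : ∀ γ' : Fin n → Fin n0 → ℝ≥0∞,
      (∀ i, ∑ j : Fin n0, γ' i j = ((n : ℝ≥0∞))⁻¹) →
      (∀ j, ∑ i : Fin n, γ' i j = w j) →
      ∑ i : Fin n, ∑ j : Fin n0, (‖u i - ξ j‖₊ : ℝ≥0∞) ^ 2 * γ i j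
        ≤ ∑ i : Fin n, ∑ j : Fin n0, (‖u i - ξ j‖₊ : ℝ≥0∞) ^ 2 * γ' i j)
    (T : Fin n → Θ → Euc k) (hT : ∀ i, Measurable (T i))
    (hTdist : ∀ i j, Q {θ | T i θ = ξ j} = γ i j * (n : ℝ≥0∞))
    (h : ℝ) (hh : 0 < h)
    -- `Δ_min = min_{i ≠ j} ‖u_i - u_j‖ > 0` and `Δ_max = max_{j,j'} ‖ξ_j - ξ_j'‖`
    (Δmin Δmax : ℝ) (hΔmin0 : 0 < Δmin)
    (hΔmin : ∀ i j : Fin n, i ≠ j → Δmin ≤ ‖u i - u j‖)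
    (hΔmax : ∀ j j' : Fin n0, ‖ξ j - ξ j'‖ ≤ Δmax) :
    W2sq (((unifFin n).prod Q).map (fun q => nwMap u T h q.2 (u q.1)))
        (∑ j : Fin n0, w j • Measure.dirac (ξ j))
      ≤ (n : ℝ≥0∞) ^ 2 * ENNReal.ofReal (Real.exp (-(Δmin ^ 2 / h ^ 2))) *
          ENNReal.ofReal (Δmax ^ 2) :=
  (W2sq_nw_training_to_barycenter_general hn hξ hγrow hγcol hT hTdist hh hΔmin0.le hΔmin
    hΔmax).trans (ofReal_sq_sub_one_mul_exp_neg_mul_le hn (by positivity) Δmax)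

end
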